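/- arXiv:2508.03273 — 3 statements merged into one kernel-verified Lean document; each statement's English description precedes it below -/
import Mathlib

section
/- Let ω be a weight function such that φ(t) = ω(e^t) is convex and such that log t = o(ω(t)) as t → ∞. Then for any 0 < r₀ < r₁, one has e^{(1/r₀) φ*(r₀ v)} = o( e^{(1/r₁) φ*(r₁ v)} ) as v → ∞; that is, e^{(1/r₀) φ*(r₀ v) − (1/r₁) φ*(r₁ v)} → 0 as v → ∞. -/
open MeasureTheory Filter

noncomputable section

/-- The Young conjugate `φ*(v) = sup_{u ≥ 0} (u v − φ(u))`, valued in `EReal`. -/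
def youngConj (φ : ℝ → ℝ) (v : ℝ) : EReal :=
  ⨆ u : Set.Ici (0 : ℝ), (((u : ℝ) * v - φ u : ℝ) : EReal)

/-!
For `r > 0`, the function `v ↦ φ*(r v) / r` is the Young conjugate of `φ / r`, and
`φ / r₀ - φ / r₁ = (1 / r₀ - 1 / r₁) φ` tends to infinity with `φ`. It is thus enough to compare
the conjugates of two functions whose difference `ψ₀ - ψ₁` tends to infinity: given a real `C`,
`ψ₀ ≥ ψ₁ - C` beyond some `U`, so the points `u ≥ U` contribute at most `C + ψ₁*(v)` to `ψ₀*(v)`.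
The points `u ≤ U` contribute at most `U v + O(1)`, while `ψ₁*(v) ≥ (U + 1) v + O(1)`.
-/

theorem le_youngConj (φ : ℝ → ℝ) (v : ℝ) {u : ℝ} (hu : 0 ≤ u) :
    ((u * v - φ u : ℝ) : EReal) ≤ youngConj φ v :=
  le_iSup (fun u : Set.Ici (0 : ℝ) => (((u : ℝ) * v - φ u : ℝ) : EReal)) ⟨u, hu⟩

theorem youngConj_le_iff {φ : ℝ → ℝ} {v : ℝ} {a : EReal} :
    youngConj φ v ≤ a ↔ ∀ u, 0 ≤ u → ((u * v - φ u : ℝ) : EReal) ≤ a := by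
  simp only [youngConj, iSup_le_iff, Subtype.forall, Set.mem_Ici]

theorem coe_mul_youngConj {c : ℝ} (hc : 0 < c) (φ : ℝ → ℝ) (v : ℝ) :
    (c : EReal) * youngConj φ v = youngConj (fun u => c * φ u) (c * v) := by
  have gc : GaloisConnection (fun x : EReal => x * c) (fun x => x / c) := fun _ _ =>
    (EReal.le_div_iff_mul_le (EReal.coe_pos.2 hc) (EReal.coe_ne_top c)).symm
  rw [mul_comm, youngConj, gc.l_iSup, youngConj]
  refine iSup_congr fun u => ?_
  rw [← EReal.coe_mul]
  congr 1
  ring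

theorem youngConj_ne_top {φ : ℝ → ℝ} {m : ℝ} (hm : ∀ u, 0 ≤ u → m ≤ φ u)
    (hφ : Tendsto (fun u => φ u / u) atTop atTop) (v : ℝ) : youngConj φ v ≠ ⊤ := by
  obtain ⟨U, hU, hφU⟩ : ∃ U : ℝ, 0 < U ∧ ∀ u, U ≤ u → v ≤ φ u / u :=
    ((eventually_gt_atTop 0).and
      (eventually_forall_ge_atTop.2 (hφ.eventually_ge_atTop v))).exists
  suffices h : youngConj φ v ≤ ((max 0 (U * |v| - m) : ℝ) : EReal) from
    ne_top_of_le_ne_top (EReal.coe_ne_top _) h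
  refine youngConj_le_iff.2 fun u hu => EReal.coe_le_coe_iff.2 ?_
  rcases le_total U u with hUu | huU
  · have hvu : v * u ≤ φ u := (le_div_iff₀ (hU.trans_le hUu)).1 (hφU u hUu)
    exact le_max_of_le_left (by linarith)
  · have huv : u * v ≤ U * |v| := mul_le_mul_of_nonneg huU (le_abs_self v) hu (abs_nonneg v)
    exact le_max_of_le_right (sub_le_sub huv (hm u hu))

theorem eventually_youngConj_le_const_add {ψ₀ ψ₁ : ℝ → ℝ} {m : ℝ}
    (hm : ∀ u, 0 ≤ u → m ≤ ψ₀ u) (hψ : Tendsto (fun u => ψ₀ u - ψ₁ u) atTop atTop)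
    (C : ℝ) : ∀ᶠ v in atTop, youngConj ψ₀ v ≤ C + youngConj ψ₁ v := by
  obtain ⟨U, hU, hψU⟩ : ∃ U : ℝ, 0 ≤ U ∧ ∀ u, U ≤ u → -C ≤ ψ₀ u - ψ₁ u :=
    ((eventually_ge_atTop 0).and
      (eventually_forall_ge_atTop.2 (hψ.eventually_ge_atTop (-C)))).exists
  filter_upwards [eventually_ge_atTop 0, eventually_ge_atTop (ψ₁ (U + 1) - m - C)] with v hv hvU
  have le_const_add {x w : ℝ} (hw : 0 ≤ w) (hx : x ≤ C + (w * v - ψ₁ w)) :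
      (x : EReal) ≤ C + youngConj ψ₁ v :=
    (EReal.coe_le_coe hx).trans (add_le_add_right (le_youngConj ψ₁ v hw) (C : EReal))
  refine youngConj_le_iff.2 fun u hu => ?_
  rcases le_total U u with hUu | huU
  · exact le_const_add hu (by linarith [hψU u hUu])
  · have huv : u * v ≤ U * v := mul_le_mul_of_nonneg_right huU hv
    exact le_const_add (w := U + 1) (by linarith) (by linarith [hm u hu])

theorem tendsto_div_atTop_of_isLittleO {α : Type*} {l : Filter α} {f g : α → ℝ}
    (hfg : f =o[l] g) (hf : ∀ᶠ x in l, 0 < f x) (hg : ∀ᶠ x in l, 0 ≤ g x) :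
    Tendsto (fun x => g x / f x) l atTop := by
  refine tendsto_atTop.2 fun M => ?_
  filter_upwards [(hfg.const_mul_left M).eventuallyLE, hf, hg] with x hx hfx hgx
  rw [le_div_iff₀ hfx]
  calc M * f x ≤ ‖M * f x‖ := Real.le_norm_self _
    _ ≤ ‖g x‖ := hx
    _ = g x := Real.norm_of_nonneg hgx

theorem tendsto_comp_exp_div_atTop {ω : ℝ → ℝ} (hω : ∀ᶠ t in atTop, 0 ≤ ω t)
    (hlog : (fun t : ℝ => Real.log t) =o[atTop] ω) :
    Tendsto (fun u => ω (Real.exp u) / u) atTop atTop := by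
  have hexp : (fun u : ℝ => u) =o[atTop] fun u => ω (Real.exp u) := by
    simpa only [Function.comp_def, Real.log_exp] using hlog.comp_tendsto Real.tendsto_exp_atTop
  exact tendsto_div_atTop_of_isLittleO hexp (eventually_gt_atTop 0)
    (Real.tendsto_exp_atTop.eventually hω)

theorem stmt4_general {φ : ℝ → ℝ} {m : ℝ} (hm : ∀ u, 0 ≤ u → m ≤ φ u)
    (hφ : Tendsto (fun u => φ u / u) atTop atTop) {r₀ r₁ : ℝ} (hr₀ : 0 < r₀) (hr : r₀ < r₁) :
    Tendsto (fun v : ℝ =>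
        EReal.exp (((1 / r₀ : ℝ) : EReal) * youngConj φ (r₀ * v)
          - ((1 / r₁ : ℝ) : EReal) * youngConj φ (r₁ * v)))
      atTop (nhds (0 : ENNReal)) := by
  have hr₁ : 0 < r₁ := hr₀.trans hr
  have rescale {r : ℝ} (hr : 0 < r) (v : ℝ) :
      ((1 / r : ℝ) : EReal) * youngConj φ (r * v) = youngConj (fun u => 1 / r * φ u) v := by
    rw [coe_mul_youngConj (one_div_pos.2 hr), ← mul_assoc, one_div_mul_cancel hr.ne', one_mul]
  have bound {r : ℝ} (hr : 0 < r) (u : ℝ) (hu : 0 ≤ u) : 1 / r * m ≤ 1 / r * φ u :=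
    mul_le_mul_of_nonneg_left (hm u hu) (one_div_pos.2 hr).le
  have superlinear : Tendsto (fun u => 1 / r₁ * φ u / u) atTop atTop := by
    simpa only [mul_div_assoc] using hφ.const_mul_atTop (one_div_pos.2 hr₁)
  have gap : Tendsto (fun u => 1 / r₀ * φ u - 1 / r₁ * φ u) atTop atTop := by
    have hφ_top : Tendsto φ atTop atTop := (hφ.atTop_mul_atTop₀ tendsto_id).congr' <|
      (eventually_ne_atTop 0).mono fun u hu => div_mul_cancel₀ (φ u) hu
    simpa only [sub_mul] using
      hφ_top.const_mul_atTop (sub_pos.2 (one_div_lt_one_div_of_lt hr₀ hr))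
  refine EReal.tendsto_exp_nhds_bot_nhds_zero.comp (EReal.tendsto_nhds_bot_iff_real.2 fun a => ?_)
  filter_upwards [eventually_youngConj_le_const_add (bound hr₀) gap (a - 1)] with v hv
  rw [rescale hr₀, rescale hr₁]
  -- In `EReal`, `⊤ - ⊤ = ⊥`; finiteness of the second conjugate keeps the difference genuine.
  have hfin := youngConj_ne_top (bound hr₁) superlinear v
  exact ((EReal.sub_le_iff_le_add (.inr (EReal.coe_ne_top _)) (.inl hfin)).2 hv).trans_lt
    (EReal.coe_lt_coe_iff.2 (sub_one_lt a))

theorem stmt4 (ω : ℝ → ℝ)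
    (hω_nonneg : ∀ t : ℝ, 0 ≤ t → 0 ≤ ω t)
    (hω_mono : MonotoneOn ω (Set.Ici (0 : ℝ)))
    (hω_unbdd : ∀ M : ℝ, ∃ t : ℝ, 0 ≤ t ∧ M < ω t)
    (hφ : ConvexOn ℝ Set.univ (fun t : ℝ => ω (Real.exp t)))
    (hlog : (fun t : ℝ => Real.log t) =o[atTop] ω)
    (r₀ r₁ : ℝ) (hr₀ : 0 < r₀) (hr : r₀ < r₁) :
    Tendsto (fun v : ℝ =>
        EReal.exp (((1 / r₀ : ℝ) : EReal) * youngConj (fun t => ω (Real.exp t)) (r₀ * v)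
          - ((1 / r₁ : ℝ) : EReal) * youngConj (fun t => ω (Real.exp t)) (r₁ * v)))
      atTop (nhds (0 : ENNReal)) :=
  stmt4_general (fun u _ => hω_nonneg _ (Real.exp_pos u).le)
    (tendsto_comp_exp_div_atTop ((eventually_ge_atTop 0).mono hω_nonneg) hlog) hr₀ hr

end
end

section
/- Let d ≥ 2 and let ω be a weight function such that φ(t) = ω(e^t) is convex and ω(t) = o(t²) as t → ∞. Let μ > 0, L ≥ 1 and C > 0 be such that for every t ≥ 0, inf_{s > 0} [ ((d−1)/(2d)) s^{2/(d−1)} + (1/(μ d)) ω(t^d / s) ] ≤ (L/μ) ω(t) + C. Then for every r with 0 < r < μ/L there exists C' > 0 such that e^{(1/r) φ*(r n)} ≤ C' (√(n!))^{1 − 1/d} ( e^{(1/μ) φ*(μ n)} )^{1/d} for all n ∈ ℕ. -/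
open MeasureTheory Filter

noncomputable section

/-!
By definition, `exp (φ* (r n) / r)` is the supremum of `tⁿ exp (-ω t / r)` over `t ≥ 1`. Split `tⁿ`
as `s ^ (n / d) * (tᵈ / s) ^ (n / d)`. Applying `xⁿ / n! ≤ exp x` to `x = s ^ (2 / (d - 1))` bounds
the first factor by `√n! ^ (1 - 1 / d) * exp ((d - 1) / (2 d) * s ^ (2 / (d - 1)))`, and `φ*` bounds
the second one by a constant times `exp (φ* (μ n) / μ + ω (tᵈ / s) / μ) ^ (1 / d)`. The exponents
depending on `s` add up to the expression whose infimum is assumed to be at most `L / μ * ω t + C`,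
and `L / μ ≤ 1 / r`.
-/

theorem nat_mul_log_le_log_factorial_add (n : ℕ) {x : ℝ} (hx : 0 < x) :
    n * Real.log x ≤ Real.log n.factorial + x := by
  have h := Real.log_le_log (by positivity) (Real.pow_div_factorial_le_exp x hx.le n)
  rw [Real.log_exp, Real.log_div (by positivity) (by positivity), Real.log_pow] at h
  linarith

theorem nat_mul_log_le_mul_log_factorial_add_rpow (n : ℕ) {p s : ℝ} (hp : 0 < p) (hs : 0 < s) :
    n * Real.log s ≤ p * (Real.log n.factorial + s ^ (1 / p)) := by
  have h := nat_mul_log_le_log_factorial_add n (Real.rpow_pos_of_pos hs (1 / p))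
  calc n * Real.log s = p * (n * Real.log (s ^ (1 / p))) := by
        rw [Real.log_rpow hs]
        field_simp
    _ ≤ p * (Real.log n.factorial + s ^ (1 / p)) := by gcongr

theorem youngConj_le_coe_iff {φ : ℝ → ℝ} {v c : ℝ} :
    youngConj φ v ≤ c ↔ ∀ u : ℝ, 0 ≤ u → u * v - φ u ≤ c := by
  simp only [youngConj, iSup_le_iff, EReal.coe_le_coe_iff, Subtype.forall, Set.mem_Ici]

theorem youngConj_ne_bot (φ : ℝ → ℝ) (v : ℝ) : youngConj φ v ≠ ⊥ :=
  fun h => EReal.coe_ne_bot _ (iSup_eq_bot.1 h ⟨0, Set.self_mem_Ici⟩)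

theorem ereal_exp_one_div_mul_le_ofReal_exp {r b : ℝ} {x : EReal} (hr : 0 < r)
    (hx : x ≤ (r * b : ℝ)) :
    EReal.exp ((1 / r : ℝ) * x) ≤ ENNReal.ofReal (Real.exp b) := by
  have h : ((1 / r : ℝ) : EReal) * x ≤ (b : ℝ) :=
    calc ((1 / r : ℝ) : EReal) * x ≤ (1 / r : ℝ) * (r * b : ℝ) :=
          mul_le_mul_of_nonneg_left hx (EReal.coe_nonneg.2 (by positivity))
      _ = (b : ℝ) := by rw [← EReal.coe_mul, one_div, inv_mul_cancel_left₀ hr.ne']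
  simpa only [EReal.exp_coe] using EReal.exp_monotone h

section

variable {ω : ℝ → ℝ} {d μ c : ℝ}

-- The supremum in `φ*` only sees `1 ≤ y`; the summand `ω 1` pays for `y < 1`.
theorem mul_log_le_of_youngConj_le (hω : ∀ t : ℝ, 0 ≤ t → 0 ≤ ω t) {v y : ℝ} (hv : 0 ≤ v)
    (hc : youngConj (fun t => ω (Real.exp t)) v ≤ c) (hy : 0 < y) :
    v * Real.log y ≤ c + ω 1 + ω y := by
  rw [youngConj_le_coe_iff] at hc
  rcases le_total 0 (Real.log y) with hlog | hlog
  · have h := hc (Real.log y) hlog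
    rw [Real.exp_log hy] at h
    linarith [hω 1 zero_le_one]
  · have h := hc 0 le_rfl
    rw [Real.exp_zero] at h
    linarith [mul_nonpos_of_nonneg_of_nonpos hv hlog, hω y hy.le]

theorem nat_mul_log_le_add_of_youngConj_le (hω : ∀ t : ℝ, 0 ≤ t → 0 ≤ ω t) (hd : 1 < d)
    (hμ : 0 < μ) {n : ℕ} (hc : youngConj (fun t => ω (Real.exp t)) (μ * n) ≤ c)
    {s t : ℝ} (hs : 0 < s) (ht : 0 < t) :
    n * Real.log t ≤ (d - 1) / (2 * d) * Real.log n.factorial + (c + ω 1) / (μ * d) +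
      ((d - 1) / (2 * d) * s ^ (2 / (d - 1)) + 1 / (μ * d) * ω (t ^ d / s)) := by
  have hd₁ : 0 < d - 1 := sub_pos.2 hd
  have hfirst := nat_mul_log_le_mul_log_factorial_add_rpow n (half_pos hd₁) hs
  rw [one_div_div] at hfirst
  have hsecond := mul_log_le_of_youngConj_le hω (by positivity) hc
    (div_pos (Real.rpow_pos_of_pos ht d) hs)
  have hsplit : Real.log (t ^ d / s) = d * Real.log t - Real.log s := by
    rw [Real.log_div (by positivity) hs.ne', Real.log_rpow ht]
  calc n * Real.log t
      = n * Real.log s / d + μ * n * Real.log (t ^ d / s) / (μ * d) := by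
        rw [hsplit]
        field_simp
        ring
    _ ≤ (d - 1) / 2 * (Real.log n.factorial + s ^ (2 / (d - 1))) / d +
          (c + ω 1 + ω (t ^ d / s)) / (μ * d) := by gcongr
    _ = _ := by
        field_simp
        ring

theorem nat_mul_log_le_add_iInf_of_youngConj_le (hω : ∀ t : ℝ, 0 ≤ t → 0 ≤ ω t) (hd : 1 < d)
    (hμ : 0 < μ) {n : ℕ} (hc : youngConj (fun t => ω (Real.exp t)) (μ * n) ≤ c)
    {t : ℝ} (ht : 0 < t) :
    n * Real.log t ≤ (d - 1) / (2 * d) * Real.log n.factorial + (c + ω 1) / (μ * d) +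
      ⨅ s : Set.Ioi (0 : ℝ),
        (d - 1) / (2 * d) * (s : ℝ) ^ (2 / (d - 1)) + 1 / (μ * d) * ω (t ^ d / s) := by
  rw [← sub_le_iff_le_add']
  exact le_ciInf fun s =>
    sub_le_iff_le_add'.2 (nat_mul_log_le_add_of_youngConj_le hω hd hμ hc s.2 ht)

theorem youngConj_le_of_iInf_le (hω : ∀ t : ℝ, 0 ≤ t → 0 ≤ ω t) (hd : 1 < d) (hμ : 0 < μ)
    {L C r : ℝ}
    (hInf : ∀ t : ℝ, 0 ≤ t →
      (⨅ s : Set.Ioi (0 : ℝ),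
        (d - 1) / (2 * d) * (s : ℝ) ^ (2 / (d - 1)) + 1 / (μ * d) * ω (t ^ d / s))
          ≤ L / μ * ω t + C)
    (hr : 0 < r) (hrL : r * L ≤ μ) {n : ℕ}
    (hc : youngConj (fun t => ω (Real.exp t)) (μ * n) ≤ c) :
    youngConj (fun t => ω (Real.exp t)) (r * n) ≤
      (r * ((d - 1) / (2 * d) * Real.log n.factorial + (c + ω 1) / (μ * d) + C) : ℝ) := by
  refine youngConj_le_coe_iff.2 fun u _ => ?_
  have hpos := Real.exp_pos u
  have hlog := nat_mul_log_le_add_iInf_of_youngConj_le hω hd hμ hc hpos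
  rw [Real.log_exp] at hlog
  have hLω : r * (L / μ * ω (Real.exp u)) ≤ ω (Real.exp u) :=
    calc r * (L / μ * ω (Real.exp u)) = r * L / μ * ω (Real.exp u) := by ring
      _ ≤ ω (Real.exp u) :=
        mul_le_of_le_one_left (hω _ hpos.le) ((div_le_one hμ).2 hrL)
  have hmul := mul_le_mul_of_nonneg_left
    (hlog.trans (add_le_add_right (hInf _ hpos.le) _)) hr.le
  linarith

end

theorem exp_log_add_eq_mul_sqrt_rpow_mul {d x : ℝ} (hd : d ≠ 0) (hx : 0 < x) (a b C μ : ℝ) :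
    Real.exp ((d - 1) / (2 * d) * Real.log x + (a + b) / (μ * d) + C) =
      Real.exp (b / (μ * d) + C) * √x ^ (1 - 1 / d) * Real.exp (1 / μ * a) ^ (1 / d) := by
  rw [← Real.rpow_div_two_eq_sqrt _ hx.le, Real.rpow_def_of_pos hx, ← Real.exp_mul,
    ← Real.exp_add, ← Real.exp_add]
  congr 1
  field_simp
  ring

theorem stmt16_general {d : ℝ} (hd : 1 < d) {ω : ℝ → ℝ} (hω : ∀ t : ℝ, 0 ≤ t → 0 ≤ ω t)
    {μ L C : ℝ} (hμ : 0 < μ)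
    (hInf : ∀ t : ℝ, 0 ≤ t →
      (⨅ s : Set.Ioi (0 : ℝ),
        (d - 1) / (2 * d) * (s : ℝ) ^ (2 / (d - 1)) + 1 / (μ * d) * ω (t ^ d / s))
          ≤ L / μ * ω t + C)
    {r : ℝ} (hr : 0 < r) (hrL : r * L ≤ μ) :
    ∃ C' : ℝ, 0 < C' ∧ ∀ n : ℕ,
      EReal.exp ((1 / r : ℝ) * youngConj (fun t => ω (Real.exp t)) (r * n))
        ≤ ENNReal.ofReal (C' * √n.factorial ^ (1 - 1 / d)) *
          EReal.exp ((1 / μ : ℝ) * youngConj (fun t => ω (Real.exp t)) (μ * n)) ^ (1 / d) := by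
  have hd₀ : 0 < d := one_pos.trans hd
  refine ⟨Real.exp (ω 1 / (μ * d) + C), Real.exp_pos _, fun n => ?_⟩
  have hcoef : 0 < Real.exp (ω 1 / (μ * d) + C) * √n.factorial ^ (1 - 1 / d) := by positivity
  by_cases htop : youngConj (fun t => ω (Real.exp t)) (μ * n) = ⊤
  · rw [htop, EReal.coe_mul_top_of_pos (by positivity), EReal.exp_top,
      ENNReal.top_rpow_of_pos (by positivity), ENNReal.mul_top (ENNReal.ofReal_pos.2 hcoef).ne']
    exact le_top
  · obtain ⟨c, hc⟩ : ∃ c : ℝ, youngConj (fun t => ω (Real.exp t)) (μ * n) = c :=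
      ⟨_, (EReal.coe_toReal htop (youngConj_ne_bot _ _)).symm⟩
    refine (ereal_exp_one_div_mul_le_ofReal_exp hr
      (youngConj_le_of_iInf_le hω hd hμ hInf hr hrL hc.le)).trans_eq ?_
    rw [exp_log_add_eq_mul_sqrt_rpow_mul hd₀.ne' (by positivity), ENNReal.ofReal_mul hcoef.le,
      hc, ← EReal.coe_mul, EReal.exp_coe, ENNReal.ofReal_rpow_of_pos (Real.exp_pos _)]

theorem stmt16 (d : ℕ) (hd : 2 ≤ d) (ω : ℝ → ℝ)
    (hω_nonneg : ∀ t : ℝ, 0 ≤ t → 0 ≤ ω t)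
    (hω_mono : MonotoneOn ω (Set.Ici (0 : ℝ)))
    (hω_unbdd : ∀ M : ℝ, ∃ t : ℝ, 0 ≤ t ∧ M < ω t)
    (hφ : ConvexOn ℝ Set.univ (fun t : ℝ => ω (Real.exp t)))
    (ho : ω =o[atTop] (fun t : ℝ => t ^ 2))
    (μ L C : ℝ) (hμ : 0 < μ) (hL : 1 ≤ L) (hC : 0 < C)
    (hGI : ∀ t : ℝ, 0 ≤ t →
      (⨅ s : Set.Ioi (0 : ℝ),
          ((d - 1 : ℝ) / (2 * d)) * (s : ℝ) ^ (2 / ((d : ℝ) - 1)) +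
            (1 / (μ * d)) * ω (t ^ (d : ℕ) / (s : ℝ)))
        ≤ (L / μ) * ω t + C) :
    ∀ r : ℝ, 0 < r → r < μ / L →
      ∃ C' : ℝ, 0 < C' ∧
        ∀ n : ℕ,
          EReal.exp (((1 / r : ℝ) : EReal) *
              youngConj (fun t => ω (Real.exp t)) (r * n))
            ≤ ENNReal.ofReal (C' * Real.sqrt (n.factorial) ^ (1 - 1 / (d : ℝ))) *
              EReal.exp (((1 / μ : ℝ) : EReal) *
                youngConj (fun t => ω (Real.exp t)) (μ * n)) ^ ((1 : ℝ) / d) := by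
  intro r hr hrL
  exact stmt16_general (by exact_mod_cast hd) hω_nonneg hμ
    (by simpa only [Real.rpow_natCast] using hGI) hr
    ((le_div_iff₀ (one_pos.trans_le hL)).1 hrL.le)

end
end

section
/- Let d ≥ 2 and let ω be a weight function such that φ(t) = ω(e^t) is convex, ω(t) = o(t²) as t → ∞, and there exist L₀ ≥ 1, C₀ > 0 with ω(t+s) ≤ L₀ (ω(t) + ω(s)) + C₀ for all t, s ≥ 0. Suppose there exists σ ∈ (1, d) such that ω(t) = o( t^{2(d−σ)/(d−1)} ) and ω(t) = o( ω(t^σ) ) as t → ∞. Then ω does not satisfy Gaussian interpolation of dimension d; that is, for every L > 0 and every C > 0 there exists t ≥ 0 such that for all σ' ∈ (1, d): t^{2(d−σ')/(d−1)} + ω(t^{σ'}) > L ω(t) + C. -/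
open MeasureTheory Filter

noncomputable section

/-!
For `t ≥ 1` the power `t ^ (2 * (d - τ) / (d - 1))` is nonincreasing in `τ`, while `ω (t ^ τ)` is
nondecreasing in `τ`. Moving `τ` away from `σ` in either direction thus keeps one of the two
summands at least as large as at `σ`, where both of them dominate `ω t`.
-/

theorem min_le_add_of_antitone_of_monotone {ι R : Type*} [LinearOrder ι] [AddCommMonoid R]
    [LinearOrder R] [IsOrderedAddMonoid R] {u v : ι → R} (hu : Antitone u) (hv : Monotone v)
    (hu₀ : ∀ i, 0 ≤ u i) (hv₀ : ∀ i, 0 ≤ v i) (i j : ι) :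
    min (u i) (v i) ≤ u j + v j := by
  rcases le_total j i with hji | hij
  · exact (min_le_left _ _).trans <| (hu hji).trans <| le_add_of_nonneg_right (hv₀ j)
  · exact (min_le_right _ _).trans <| (hv hij).trans <| le_add_of_nonneg_left (hu₀ j)

theorem eventually_const_mul_le_of_isLittleO {α : Type*} {l : Filter α} {f g : α → ℝ}
    (hfg : f =o[l] g) (hg : ∀ᶠ x in l, 0 ≤ g x) (c : ℝ) : ∀ᶠ x in l, c * f x ≤ g x := by
  filter_upwards [(hfg.const_mul_left c).eventuallyLE, hg] with x hx hgx
  exact (Real.le_norm_self _).trans <| hx.trans_eq <| Real.norm_of_nonneg hgx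

theorem eventually_forall_const_mul_le_add_of_isLittleO {α ι : Type*} [LinearOrder ι] {l : Filter α}
    {f : α → ℝ} {u v : α → ι → ℝ}
    (hu : ∀ᶠ x in l, Antitone (u x)) (hv : ∀ᶠ x in l, Monotone (v x))
    (hu₀ : ∀ᶠ x in l, ∀ i, 0 ≤ u x i) (hv₀ : ∀ᶠ x in l, ∀ i, 0 ≤ v x i) {i : ι}
    (hfu : f =o[l] fun x => u x i) (hfv : f =o[l] fun x => v x i) (c : ℝ) :
    ∀ᶠ x in l, ∀ j, c * f x ≤ u x j + v x j := by
  have hfu_le := eventually_const_mul_le_of_isLittleO hfu (hu₀.mono fun _ h => h i) c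
  have hfv_le := eventually_const_mul_le_of_isLittleO hfv (hv₀.mono fun _ h => h i) c
  filter_upwards [hu, hv, hu₀, hv₀, hfu_le, hfv_le] with x hux hvx hux₀ hvx₀ hfux hfvx j
  exact (le_min hfux hfvx).trans
    (min_le_add_of_antitone_of_monotone hux hvx hux₀ hvx₀ i j)

theorem tendsto_atTop_of_monotoneOn_Ici {α β : Type*} [Preorder α] [Preorder β] {f : α → β}
    {a : α} (hf : MonotoneOn f (Set.Ici a)) (hf_unbdd : ∀ b, ∃ x, a ≤ x ∧ b ≤ f x) :
    Tendsto f atTop atTop := by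
  refine tendsto_atTop.2 fun b => ?_
  obtain ⟨x, hax, hbx⟩ := hf_unbdd b
  filter_upwards [eventually_ge_atTop x] with y hxy
  exact hbx.trans (hf hax (hax.trans hxy) hxy)

theorem antitone_two_mul_sub_div_sub_one {d : ℝ} (hd : 1 < d) :
    Antitone fun τ : ℝ => 2 * (d - τ) / (d - 1) := by
  intro τ τ' hτ
  exact div_le_div_of_nonneg_right (by gcongr) (sub_pos.2 hd).le

theorem monotone_comp_rpow_of_monotoneOn {β : Type*} [Preorder β] {f : ℝ → β}
    (hf : MonotoneOn f (Set.Ici 0)) {t : ℝ} (ht : 1 ≤ t) : Monotone fun τ : ℝ => f (t ^ τ) := by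
  have ht_mem : ∀ τ : ℝ, t ^ τ ∈ Set.Ici 0 := Real.rpow_nonneg (zero_le_one.trans ht)
  intro τ τ' hτ
  exact hf (ht_mem τ) (ht_mem τ') (Real.rpow_le_rpow_of_exponent_le ht hτ)

theorem stmt17_general {d : ℝ} (hd : 1 < d) {ω : ℝ → ℝ}
    (hω_nonneg : ∀ t, 0 ≤ t → 0 ≤ ω t) (hω_mono : MonotoneOn ω (Set.Ici 0))
    (hω_unbdd : ∀ M, ∃ t, 0 ≤ t ∧ M < ω t) {σ : ℝ}
    (hω_power : ω =o[atTop] fun t => t ^ (2 * (d - σ) / (d - 1)))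
    (hω_comp_rpow : ω =o[atTop] fun t => ω (t ^ σ)) (L C : ℝ) :
    ∀ᶠ t in atTop, ∀ τ, L * ω t + C < t ^ (2 * (d - τ) / (d - 1)) + ω (t ^ τ) := by
  have hω_gt : ∀ᶠ t in atTop, C < ω t :=
    (tendsto_atTop_of_monotoneOn_Ici hω_mono fun M =>
      (hω_unbdd M).imp fun _ h => h.imp_right le_of_lt).eventually_gt_atTop C
  have hpower_anti : ∀ᶠ t : ℝ in atTop, Antitone fun τ : ℝ => t ^ (2 * (d - τ) / (d - 1)) :=
    (eventually_ge_atTop 1).mono fun _ ht => (Real.monotone_rpow_of_base_ge_one ht).comp_antitone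
      (antitone_two_mul_sub_div_sub_one hd)
  have hω_rpow_mono : ∀ᶠ t : ℝ in atTop, Monotone fun τ : ℝ => ω (t ^ τ) :=
    (eventually_ge_atTop 1).mono fun _ ht => monotone_comp_rpow_of_monotoneOn hω_mono ht
  have hpower_nonneg : ∀ᶠ t : ℝ in atTop, ∀ τ : ℝ, 0 ≤ t ^ (2 * (d - τ) / (d - 1)) :=
    (eventually_ge_atTop 0).mono fun t ht τ => Real.rpow_nonneg ht _
  have hω_rpow_nonneg : ∀ᶠ t : ℝ in atTop, ∀ τ : ℝ, 0 ≤ ω (t ^ τ) :=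
    (eventually_ge_atTop 0).mono fun t ht τ => hω_nonneg _ (Real.rpow_nonneg ht τ)
  have hω_le := eventually_forall_const_mul_le_add_of_isLittleO hpower_anti hω_rpow_mono
    hpower_nonneg hω_rpow_nonneg hω_power hω_comp_rpow (L + 1)
  filter_upwards [hω_gt, hω_le] with t hCt hω_le_t τ
  calc
    L * ω t + C < L * ω t + ω t := by gcongr
    _ = (L + 1) * ω t := by ring
    _ ≤ t ^ (2 * (d - τ) / (d - 1)) + ω (t ^ τ) := hω_le_t τ

theorem stmt17 (d : ℕ) (hd : 2 ≤ d) (ω : ℝ → ℝ)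
    (hω_nonneg : ∀ t : ℝ, 0 ≤ t → 0 ≤ ω t)
    (hω_mono : MonotoneOn ω (Set.Ici (0 : ℝ)))
    (hω_unbdd : ∀ M : ℝ, ∃ t : ℝ, 0 ≤ t ∧ M < ω t)
    (hφ : ConvexOn ℝ Set.univ (fun t : ℝ => ω (Real.exp t)))
    (ho : ω =o[atTop] (fun t : ℝ => t ^ 2))
    (L₀ C₀ : ℝ) (hL₀ : 1 ≤ L₀) (hC₀ : 0 < C₀)
    (hadd : ∀ t s : ℝ, 0 ≤ t → 0 ≤ s → ω (t + s) ≤ L₀ * (ω t + ω s) + C₀)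
    (σ : ℝ) (hσ : σ ∈ Set.Ioo (1 : ℝ) (d : ℝ))
    (ho₁ : ω =o[atTop] (fun t : ℝ => t ^ (2 * ((d : ℝ) - σ) / ((d : ℝ) - 1))))
    (ho₂ : ω =o[atTop] (fun t : ℝ => ω (t ^ σ))) :
    ∀ L : ℝ, 0 < L → ∀ C : ℝ, 0 < C →
      ∃ t : ℝ, 0 ≤ t ∧ ∀ σ' ∈ Set.Ioo (1 : ℝ) (d : ℝ),
        L * ω t + C < t ^ (2 * ((d : ℝ) - σ') / ((d : ℝ) - 1)) + ω (t ^ σ') := by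
  intro L _ C _
  obtain ⟨t, ht, ht₀⟩ := ((stmt17_general (Nat.one_lt_cast.2 hd) hω_nonneg hω_mono hω_unbdd
    ho₁ ho₂ L C).and (eventually_ge_atTop 0)).exists
  exact ⟨t, ht₀, fun σ' _ => ht σ'⟩

end
end
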